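/- For each j ∈ [p], let f_j : {0,1}^n → ℝ_+ be a nonnegative submodular function and K_j ⊆ ℝ^{q_j} a convex cone containing the origin. Then conv(S({f_j},{K_j})) = Ŝ({f_j},{K_j}), and moreover Ŝ({f_j},{K_j}) = {(x,z) ∈ ℝ^{mp} × [0,1]^n : ∃ y ∈ ℝ^p such that for all j ∈ [p], (y_j,z) ∈ conv(Epi(f_j)) and A^j x^j + B^j y_j ∈ K_j}. -/

import Mathlib

/-!
Convexification commutes with the conic constraints. If `(y, z) = ∑ λ_k (y^k, z^k)` with `λ_k > 0`
and `y^k ≥ 0`, every block `(x_j, y_j)` of a feasible point is the same convex combination of its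
nonnegative multiples with second coordinate `y^k_j`: the multipliers are `y^k_j / y_j`, or `1` when
`y_j = 0`, since then every `y^k_j` vanishes.

For submodular functions the hull of the joint epigraph splits into the individual ones. A point `z`
of the unit cube is the average of the indicators of its superlevel sets `{i | t < z i}`, a chain
that does not depend on `j`. The greedy algorithm gives, for every `j`, an affine minorant of `f j`
which is exact on this chain; its value at `z` is therefore a lower bound for every `y_j` with
`(y_j, z)` in the hull of the `j`-th epigraph, and all these bounds are attained by one and the same
convex combination.
-/

section ConicLift

open Finset

variable {𝕜 ι Z : Type*} {X : ι → Type*}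
  [Field 𝕜] [LinearOrder 𝕜] [IsStrictOrderedRing 𝕜]
  [AddCommGroup Z] [Module 𝕜 Z] [∀ j, AddCommGroup (X j)] [∀ j, Module 𝕜 (X j)]

/-- The set of pairs `(x, z)` linked by some `y` to a point `(y, z)` of the set `G` through one cone
constraint per coordinate. A constraint `A x + B y ∈ K` is encoded by the preimage of `K` in the
`(x, y)`-space. -/
def conicLift (C : ∀ j, PointedCone 𝕜 (X j × 𝕜)) (G : Set ((ι → 𝕜) × Z)) :
    Set ((∀ j, X j) × Z) :=
  {w | ∃ y : ι → 𝕜, (y, w.2) ∈ G ∧ ∀ j, (w.1 j, y j) ∈ C j}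

lemma convex_conicLift (C : ∀ j, PointedCone 𝕜 (X j × 𝕜)) {G : Set ((ι → 𝕜) × Z)}
    (hG : Convex 𝕜 G) : Convex 𝕜 (conicLift C G) := by
  rintro w ⟨y, hy, hyC⟩ w' ⟨y', hy', hyC'⟩ a b ha hb hab
  exact ⟨a • y + b • y', hG hy hy' ha hb hab, fun j ↦ (C j).convex (hyC j) (hyC' j) ha hb hab⟩

lemma exists_rescaling_of_pos_weights {κ : Type*} [Fintype κ] {w u : κ → 𝕜} (hw : ∀ k, 0 < w k)
    (hw1 : ∑ k, w k = 1) (hu : ∀ k, 0 ≤ u k) :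
    ∃ r : κ → 𝕜, (∀ k, 0 ≤ r k) ∧ (∀ k, r k * ∑ i, w i * u i = u k) ∧ ∑ k, w k * r k = 1 := by
  have hwu (k) : 0 ≤ w k * u k := mul_nonneg (hw k).le (hu k)
  rcases eq_or_ne (∑ i, w i * u i) 0 with h0 | h0
  · have hu0 (k) : u k = 0 := by
      have := (sum_eq_zero_iff_of_nonneg fun i _ ↦ hwu i).1 h0 k (mem_univ k)
      exact (mul_eq_zero.1 this).resolve_left (hw k).ne'
    exact ⟨1, fun _ ↦ zero_le_one, by simp [hu0], by simpa using hw1⟩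
  · refine ⟨fun k ↦ u k / ∑ i, w i * u i, fun k ↦ div_nonneg (hu k) (sum_nonneg fun i _ ↦ hwu i),
      fun k ↦ div_mul_cancel₀ _ h0, ?_⟩
    simp_rw [← mul_div_assoc, ← sum_div, div_self h0]

theorem convexHull_conicLift (C : ∀ j, PointedCone 𝕜 (X j × 𝕜)) {G : Set ((ι → 𝕜) × Z)}
    (hG : ∀ v ∈ G, ∀ j, 0 ≤ v.1 j) :
    convexHull 𝕜 (conicLift C G) = conicLift C (convexHull 𝕜 G) := by
  refine Set.Subset.antisymm (convexHull_min
    (fun w ⟨y, hy, hyC⟩ ↦ ⟨y, subset_convexHull 𝕜 G hy, hyC⟩)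
    (convex_conicLift C (convex_convexHull 𝕜 G))) ?_
  rintro ⟨x, z⟩ ⟨y, hyz, hC⟩
  obtain ⟨κ, _, v, w, hv, -, hw, hw1, hwv⟩ := eq_pos_convex_span_of_mem_convexHull hyz
  have hvG (k) : v k ∈ G := hv ⟨k, rfl⟩
  have hy (j) : ∑ k, w k * (v k).1 j = y j := by
    simpa [Prod.fst_sum] using congr_fun (congr_arg Prod.fst hwv) j
  choose r hr hrv hr1 using fun j ↦
    exists_rescaling_of_pos_weights hw hw1 fun k ↦ hG (v k) (hvG k) j
  simp only [hy] at hrv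
  have hmem (k) : ((fun j ↦ r j k • x j, (v k).2) : (∀ j, X j) × Z) ∈ conicLift C G := by
    refine ⟨(v k).1, hvG k, fun j ↦ ?_⟩
    simpa [hrv] using (C j).smul_mem (hr j k) (hC j)
  have hsum : ∑ k, w k • ((fun j ↦ r j k • x j, (v k).2) : (∀ j, X j) × Z) = (x, z) := by
    refine Prod.ext (funext fun j ↦ ?_) ?_
    · simp [Prod.fst_sum, smul_smul, ← sum_smul, hr1]
    · simpa [Prod.snd_sum] using congr_arg Prod.snd hwv
  rw [← hsum]
  exact (convex_convexHull 𝕜 _).sum_mem (fun k _ ↦ (hw k).le) hw1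
    fun k _ ↦ subset_convexHull 𝕜 _ (hmem k)

end ConicLift

/-- Submodularity of a real-valued set function, stated on finite sets. -/
def Submodular {α : Type*} [DecidableEq α] (f : Finset α → ℝ) : Prop :=
  ∀ S T, f (S ∪ T) + f (S ∩ T) ≤ f S + f T

/-- The vertex of the cube `{0,1}^α` that encodes the set `V`. -/
def charVec {α : Type*} [DecidableEq α] (V : Finset α) : α → ℝ :=
  fun i ↦ if i ∈ V then 1 else 0

section Greedy

open Finset

variable {α : Type*} [LinearOrder α] [LocallyFiniteOrderBot α]

/-- The coefficients of Edmonds' greedy algorithm: the marginal value of `a` when the elements are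
added in increasing order. -/
def greedySlope (f : Finset α → ℝ) (a : α) : ℝ :=
  f (Iic a) - f (Iio a)

lemma Submodular.add_sum_greedySlope_le [DecidableEq α] {f : Finset α → ℝ} (hf : Submodular f)
    (V : Finset α) : f ∅ + ∑ a ∈ V, greedySlope f a ≤ f V := by
  induction V using Finset.induction_on_max with
  | empty => simp
  | insert a V hV ih =>
    have hunion : insert a V ∪ Iio a = Iic a := by
      ext i
      have := hV i
      grind
    have hinter : insert a V ∩ Iio a = V := by
      ext i
      have := hV i
      grind
    have hsub := hf (insert a V) (Iio a)
    rw [hunion, hinter] at hsub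
    rw [sum_insert fun ha ↦ (hV a ha).false, greedySlope]
    linarith

lemma add_sum_greedySlope_of_isLowerSet (f : Finset α → ℝ) {V : Finset α}
    (hV : IsLowerSet (V : Set α)) : f ∅ + ∑ a ∈ V, greedySlope f a = f V := by
  induction V using Finset.induction_on_max with
  | empty => simp
  | insert a V hlt ih =>
    have hIic : insert a V = Iic a := by
      ext i
      have := @hV a i
      have := hlt i
      grind
    have hIio : V = Iio a := by
      ext i
      have := @hV a i
      have := hlt i
      grind
    have hlower : IsLowerSet (V : Set α) := by
      rw [hIio, coe_Iio]
      exact isLowerSet_Iio a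
    rw [sum_insert fun ha ↦ (hlt a ha).false, add_left_comm, ih hlower, hIic, hIio, greedySlope,
      sub_add_cancel]

end Greedy

lemma exists_linearOrder_antitone {α β : Type*} [LinearOrder β] (z : α → β) :
    ∃ _ : LinearOrder α, Antitone z := by
  let _ : LinearOrder α := IsWellOrder.linearOrder WellOrderingRel
  let key : α → βᵒᵈ ×ₗ α := fun i ↦ toLex (OrderDual.toDual (z i), i)
  have hkey : key.Injective := fun i j h ↦ congr_arg (fun k ↦ (ofLex k).2) h
  exact ⟨LinearOrder.lift' key hkey, fun i j h ↦ Prod.Lex.monotone_fst _ _ h⟩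

section Cube

open Finset MeasureTheory

variable {α : Type*} [Fintype α] [DecidableEq α]

lemma Submodular.exists_affine_minorant {f : Finset α → ℝ} (hf : Submodular f) (z : α → ℝ) :
    ∃ g : (α → ℝ) →ᵃ[ℝ] ℝ, (∀ V, g (charVec V) ≤ f V) ∧
      ∀ t, g (charVec {i | t < z i}) = f {i | t < z i} := by
  obtain ⟨_, hz⟩ := exists_linearOrder_antitone z
  let _ : LocallyFiniteOrderBot α := .ofIic α (fun a ↦ {i | i ≤ a}) (by simp)
  let g : (α → ℝ) →ᵃ[ℝ] ℝ :=
    AffineMap.const ℝ _ (f ∅) + (Fintype.linearCombination ℝ (greedySlope f)).toAffineMap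
  have hg (V) : g (charVec V) = f ∅ + ∑ a ∈ V, greedySlope f a := by
    simp [g, charVec, Fintype.linearCombination_apply]
  refine ⟨g, fun V ↦ (hg V).trans_le (hf.add_sum_greedySlope_le V), fun t ↦ ?_⟩
  rw [hg, add_sum_greedySlope_of_isLowerSet]
  intro i j hji hi
  rw [mem_coe, mem_filter_univ] at hi ⊢
  exact hi.trans_le (hz hji)

lemma charVec_superlevel_apply (z : α → ℝ) (i : α) :
    (fun t : ℝ ↦ charVec {k | t < z k} i) = (Set.Iio (z i)).indicator 1 := by
  ext t
  simp [charVec, Set.indicator_apply]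

lemma integrable_charVec_superlevel (z : α → ℝ) (μ : Measure ℝ) [IsFiniteMeasure μ] :
    Integrable (fun t : ℝ ↦ charVec {k | t < z k}) μ := by
  refine .of_eval fun i ↦ ?_
  rw [charVec_superlevel_apply]
  exact (integrable_const 1).indicator measurableSet_Iio

lemma integral_charVec_superlevel {z : α → ℝ} (hz : ∀ i, z i ∈ Set.Icc (0 : ℝ) 1) :
    ∫ t in Set.Ico (0 : ℝ) 1, charVec {k | t < z k} = z := by
  ext i
  have hinter : Set.Iio (z i) ∩ Set.Ico 0 1 = Set.Ico 0 (z i) := by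
    ext t
    have := (hz i).2
    grind
  rw [eval_integral (integrable_charVec_superlevel z _).eval, charVec_superlevel_apply,
    integral_indicator_one measurableSet_Iio, measureReal_restrict_apply measurableSet_Iio, hinter,
    Real.volume_real_Ico_of_le (hz i).1, sub_zero]

lemma mem_convexHull_range_charVec_superlevel {z : α → ℝ} (hz : ∀ i, z i ∈ Set.Icc (0 : ℝ) 1) :
    z ∈ convexHull ℝ (Set.range fun t : ℝ ↦ charVec {k | t < z k}) := by
  have : IsProbabilityMeasure (volume.restrict (Set.Ico (0 : ℝ) 1)) := ⟨by simp⟩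
  have hclosed : IsClosed (convexHull ℝ (Set.range fun t : ℝ ↦ charVec {k | t < z k})) :=
    ((Set.finite_range charVec).subset (Set.range_comp_subset_range _ _)).isClosed_convexHull ℝ
  have hmem := (convex_convexHull ℝ _).integral_mem hclosed
    (.of_forall fun t ↦ subset_convexHull ℝ _ ⟨t, rfl⟩)
    (integrable_charVec_superlevel z (volume.restrict (Set.Ico 0 1)))
  rwa [integral_charVec_superlevel hz] at hmem

end Cube

section Epigraph

variable {ι α : Type*} [DecidableEq α]

/-- The paper's `Epi(f)`: the epigraph of a set function over the vertices of the cube. -/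
def epigraph (f : Finset α → ℝ) : Set (ℝ × (α → ℝ)) :=
  {yz | ∃ V : Finset α, (∀ i, yz.2 i = charVec V i) ∧ f V ≤ yz.1}

/-- The paper's `G({f_j})`: the epigraph of the vector-valued set function `V ↦ (f j V)_j`. -/
def jointEpigraph (f : ι → Finset α → ℝ) : Set ((ι → ℝ) × (α → ℝ)) :=
  {yz | ∃ V : Finset α, (∀ i, yz.2 i = charVec V i) ∧ ∀ j, f j V ≤ yz.1 j}

lemma le_fst_of_mem_convexHull_epigraph {f : Finset α → ℝ} {g : (α → ℝ) →ᵃ[ℝ] ℝ}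
    (hg : ∀ V, g (charVec V) ≤ f V) {yz : ℝ × (α → ℝ)} (h : yz ∈ convexHull ℝ (epigraph f)) :
    g yz.2 ≤ yz.1 := by
  have hconvex : Convex ℝ {v : ℝ × (α → ℝ) | g v.2 - v.1 ≤ 0} :=
    (convex_Iic 0).affine_preimage (g.comp AffineMap.snd - AffineMap.fst)
  refine sub_nonpos.1 (convexHull_min ?_ hconvex h)
  rintro ⟨y, z⟩ ⟨V, hz, hy⟩
  obtain rfl : z = charVec V := funext hz
  exact sub_nonpos.2 ((hg V).trans hy)

lemma mem_convexHull_jointEpigraph_of_le {f : ι → Finset α → ℝ} {y y' : ι → ℝ} {z : α → ℝ}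
    (h : (y, z) ∈ convexHull ℝ (jointEpigraph f)) (hyy' : y ≤ y') :
    (y', z) ∈ convexHull ℝ (jointEpigraph f) := by
  have hshift : jointEpigraph f ⊆ (fun v ↦ (y' - y, 0) + v) ⁻¹' convexHull ℝ (jointEpigraph f) := by
    rintro ⟨u, v⟩ ⟨V, hv, hu⟩
    exact subset_convexHull ℝ _ ⟨V, by simpa using hv,
      fun j ↦ le_add_of_nonneg_of_le (sub_nonneg.2 (hyy' j)) (hu j)⟩
  simpa using convexHull_min hshift ((convex_convexHull ℝ _).translate_preimage_right _) h

lemma mem_Icc_of_mem_convexHull_jointEpigraph {f : ι → Finset α → ℝ} {yz : (ι → ℝ) × (α → ℝ)}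
    (h : yz ∈ convexHull ℝ (jointEpigraph f)) (i : α) : yz.2 i ∈ Set.Icc (0 : ℝ) 1 := by
  have hconvex : Convex ℝ {v : (ι → ℝ) × (α → ℝ) | v.2 i ∈ Set.Icc (0 : ℝ) 1} :=
    (convex_Icc 0 1).linear_preimage (LinearMap.proj i ∘ₗ LinearMap.snd ℝ (ι → ℝ) (α → ℝ))
  refine convexHull_min ?_ hconvex h
  rintro v ⟨V, hv, -⟩
  rw [Set.mem_ofPred_eq, hv, charVec]
  split_ifs <;> simp

lemma mem_convexHull_epigraph_of_jointEpigraph {f : ι → Finset α → ℝ} {yz : (ι → ℝ) × (α → ℝ)}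
    (h : yz ∈ convexHull ℝ (jointEpigraph f)) (j : ι) :
    (yz.1 j, yz.2) ∈ convexHull ℝ (epigraph (f j)) := by
  have hconvex : Convex ℝ {v : (ι → ℝ) × (α → ℝ) | (v.1 j, v.2) ∈ convexHull ℝ (epigraph (f j))} :=
    (convex_convexHull ℝ (epigraph (f j))).linear_preimage
      ((LinearMap.proj (φ := fun _ : ι ↦ ℝ) j).prodMap (LinearMap.id (R := ℝ) (M := α → ℝ)))
  refine convexHull_min ?_ hconvex h
  rintro v ⟨V, hz, hy⟩
  exact subset_convexHull ℝ _ ⟨V, hz, hy j⟩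

theorem convexHull_jointEpigraph [Finite α] {f : ι → Finset α → ℝ} (hf : ∀ j, Submodular (f j)) :
    convexHull ℝ (jointEpigraph f) =
      {yz | (∀ i, yz.2 i ∈ Set.Icc (0 : ℝ) 1) ∧
        ∀ j, (yz.1 j, yz.2) ∈ convexHull ℝ (epigraph (f j))} := by
  refine Set.Subset.antisymm (fun yz h ↦ ⟨mem_Icc_of_mem_convexHull_jointEpigraph h,
    mem_convexHull_epigraph_of_jointEpigraph h⟩) ?_
  rintro ⟨y, z⟩ ⟨hz, hy⟩
  have := Fintype.ofFinite α
  choose g hgf hg using fun j ↦ (hf j).exists_affine_minorant z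
  have hsub : Set.range (fun t : ℝ ↦ charVec {i | t < z i}) ⊆
      ((AffineMap.pi g).prod (AffineMap.id ℝ _)) ⁻¹' convexHull ℝ (jointEpigraph f) := by
    rintro _ ⟨t, rfl⟩
    exact subset_convexHull ℝ _ ⟨({i | t < z i} : Finset α), fun _ ↦ rfl, fun j ↦ (hg j t).ge⟩
  have hgz : (fun j ↦ g j z, z) ∈ convexHull ℝ (jointEpigraph f) :=
    convexHull_min hsub ((convex_convexHull ℝ _).affine_preimage _)
      (mem_convexHull_range_charVec_superlevel hz)
  exact mem_convexHull_jointEpigraph_of_le hgz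
    fun j ↦ le_fst_of_mem_convexHull_epigraph (hgf j) (hy j)

end Epigraph

section General

variable {ι α : Type*} {X : ι → Type*} [DecidableEq α]
  [∀ j, AddCommGroup (X j)] [∀ j, Module ℝ (X j)]

/-- The paper's `S({f_j},{K_j})`, with the constraint `A^j x^j + B^j y_j ∈ K_j` written as
`(x^j, y_j) ∈ C j`. -/
def mixedBinarySet (f : ι → Finset α → ℝ) (C : ∀ j, PointedCone ℝ (X j × ℝ)) :
    Set ((∀ j, X j) × (α → ℝ)) :=
  {w | ∃ V : Finset α, (∀ i, w.2 i = charVec V i) ∧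
    ∃ y : ι → ℝ, ∀ j, f j V ≤ y j ∧ (w.1 j, y j) ∈ C j}

/-- The paper's `Ŝ({f_j},{K_j})`, with the constraint `A^j x^j + B^j y_j ∈ K_j` written as
`(x^j, y_j) ∈ C j`. -/
def hullRelaxation (f : ι → Finset α → ℝ) (C : ∀ j, PointedCone ℝ (X j × ℝ)) :
    Set ((∀ j, X j) × (α → ℝ)) :=
  {w | (∀ i, w.2 i ∈ Set.Icc (0 : ℝ) 1) ∧
    ∃ y : ι → ℝ, (y, w.2) ∈ convexHull ℝ (jointEpigraph f) ∧ ∀ j, (w.1 j, y j) ∈ C j}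

lemma mixedBinarySet_eq_conicLift (f : ι → Finset α → ℝ) (C : ∀ j, PointedCone ℝ (X j × ℝ)) :
    mixedBinarySet f C = conicLift C (jointEpigraph f) := by
  ext w
  exact ⟨fun ⟨V, hV, y, hy⟩ ↦ ⟨y, ⟨V, hV, fun j ↦ (hy j).1⟩, fun j ↦ (hy j).2⟩,
    fun ⟨y, ⟨V, hV, hy⟩, hC⟩ ↦ ⟨V, hV, y, fun j ↦ ⟨hy j, hC j⟩⟩⟩

lemma hullRelaxation_eq_conicLift (f : ι → Finset α → ℝ) (C : ∀ j, PointedCone ℝ (X j × ℝ)) :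
    hullRelaxation f C = conicLift C (convexHull ℝ (jointEpigraph f)) := by
  ext w
  exact ⟨And.right, fun ⟨y, hy, hC⟩ ↦ ⟨mem_Icc_of_mem_convexHull_jointEpigraph hy, y, hy, hC⟩⟩

theorem convexHull_mixedBinarySet {f : ι → Finset α → ℝ} (hf : ∀ j V, 0 ≤ f j V)
    (C : ∀ j, PointedCone ℝ (X j × ℝ)) :
    convexHull ℝ (mixedBinarySet f C) = hullRelaxation f C := by
  rw [mixedBinarySet_eq_conicLift, hullRelaxation_eq_conicLift]
  exact convexHull_conicLift C fun _ ⟨V, _, hy⟩ j ↦ (hf j V).trans (hy j)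

theorem hullRelaxation_eq_of_submodular [Finite α] {f : ι → Finset α → ℝ}
    (hf : ∀ j, Submodular (f j)) (C : ∀ j, PointedCone ℝ (X j × ℝ)) :
    hullRelaxation f C = {w | (∀ i, w.2 i ∈ Set.Icc (0 : ℝ) 1) ∧
      ∃ y : ι → ℝ, ∀ j, (y j, w.2) ∈ convexHull ℝ (epigraph (f j)) ∧ (w.1 j, y j) ∈ C j} := by
  ext w
  simp only [hullRelaxation, convexHull_jointEpigraph hf, Set.mem_ofPred_eq, forall_and]
  tauto

theorem conv_S_multi_submodular_general [Finite α] {f : ι → Finset α → ℝ}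
    (hf : ∀ j V, 0 ≤ f j V) (hsub : ∀ j, Submodular (f j)) (C : ∀ j, PointedCone ℝ (X j × ℝ)) :
    convexHull ℝ (mixedBinarySet f C) = hullRelaxation f C ∧
    hullRelaxation f C = {w | (∀ i, w.2 i ∈ Set.Icc (0 : ℝ) 1) ∧
      ∃ y : ι → ℝ, ∀ j, (y j, w.2) ∈ convexHull ℝ (epigraph (f j)) ∧ (w.1 j, y j) ∈ C j} :=
  ⟨convexHull_mixedBinarySet hf C, hullRelaxation_eq_of_submodular hsub C⟩

end General

/-- Corollary 4: for nonnegative submodular `f_j : {0,1}^n → ℝ_+` and convex cones `K_j`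
containing the origin, `conv(S({f_j},{K_j})) = Ŝ({f_j},{K_j})`, and moreover
`Ŝ({f_j},{K_j})` equals the set described by per-`j` epigraph hulls
`(y_j,z) ∈ conv(Epi(f_j))` together with the conic constraints. Binary vectors `z` are
identified with characteristic vectors of subsets `V ⊆ [n]`. -/
theorem conv_S_multi_submodular (p n m : ℕ) (q : Fin p → ℕ)
    (f : Fin p → Finset (Fin n) → ℝ)
    (hf : ∀ j, ∀ V : Finset (Fin n), 0 ≤ f j V)
    (hsub : ∀ j, ∀ S₁ S₂ : Finset (Fin n),
      f j (S₁ ∪ S₂) + f j (S₁ ∩ S₂) ≤ f j S₁ + f j S₂)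
    (K : ∀ j, Set (Fin (q j) → ℝ))
    (hK0 : ∀ j, (0 : Fin (q j) → ℝ) ∈ K j)
    (hKadd : ∀ j, ∀ a ∈ K j, ∀ b ∈ K j, a + b ∈ K j)
    (hKsmul : ∀ j, ∀ c : ℝ, 0 ≤ c → ∀ a ∈ K j, c • a ∈ K j)
    (A : ∀ j, Matrix (Fin (q j)) (Fin m) ℝ) (B : ∀ j, Fin (q j) → ℝ)
    (S Shat : Set ((Fin p → Fin m → ℝ) × (Fin n → ℝ)))
    (G : Set ((Fin p → ℝ) × (Fin n → ℝ)))
    (Epi : Fin p → Set (ℝ × (Fin n → ℝ)))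
    (hS : S = {w | ∃ V : Finset (Fin n), (∀ i, w.2 i = if i ∈ V then (1:ℝ) else 0) ∧
      ∃ y : Fin p → ℝ, ∀ j, f j V ≤ y j ∧ (A j).mulVec (w.1 j) + y j • B j ∈ K j})
    (hG : G = {yz | ∃ V : Finset (Fin n),
      (∀ i, yz.2 i = if i ∈ V then (1:ℝ) else 0) ∧ ∀ j, f j V ≤ yz.1 j})
    (hEpi : ∀ j, Epi j = {yz : ℝ × (Fin n → ℝ) | ∃ V : Finset (Fin n),
      (∀ i, yz.2 i = if i ∈ V then (1:ℝ) else 0) ∧ f j V ≤ yz.1})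
    (hShat : Shat = {w | (∀ i, w.2 i ∈ Set.Icc (0:ℝ) 1) ∧ ∃ y : Fin p → ℝ,
      (y, w.2) ∈ convexHull ℝ G ∧
      ∀ j, (A j).mulVec (w.1 j) + y j • B j ∈ K j}) :
    convexHull ℝ S = Shat ∧
    Shat = {w | (∀ i, w.2 i ∈ Set.Icc (0:ℝ) 1) ∧ ∃ y : Fin p → ℝ,
      ∀ j, (y j, w.2) ∈ convexHull ℝ (Epi j) ∧
        (A j).mulVec (w.1 j) + y j • B j ∈ K j} := by
  subst hS hG hShat
  obtain rfl := funext hEpi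
  let cone (j : Fin p) : PointedCone ℝ (Fin (q j) → ℝ) :=
    { carrier := K j
      zero_mem' := hK0 j
      add_mem' := fun ha hb ↦ hKadd j _ ha _ hb
      smul_mem' := fun c _ ha ↦ hKsmul j c c.2 _ ha }
  exact conv_S_multi_submodular_general hf hsub fun j ↦
    (cone j).comap ((A j).mulVecLin.coprod (LinearMap.toSpanSingleton ℝ _ (B j)))
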